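/- Let f : B → A be a homomorphism of commutative rings, and assume A is flat as a B-module. Then A is faithfully flat as a B-module if and only if for every B-module N the unit map η_N : N → (N ⊗_B A)^co, η_N(n) = n ⊗ 1, is bijective (equivalently, descent along f is effective). -/

import Mathlib

open TensorProduct

universe u

noncomputable def unitMap (B A : Type u) [CommRing B] [CommRing A] [Algebra B A]
    (N : Type u) [AddCommGroup N] [Module B N] : N →ₗ[B] N ⊗[B] A :=
  (TensorProduct.mk B N A).flip 1

/-- The action map `M ⊗_B A → M`, `m ⊗ a ↦ m · a`. -/
noncomputable def actionMap (B A : Type u) [CommRing B] [CommRing A] [Algebra B A]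
    (M : Type u) [AddCommGroup M] [Module B M] [Module A M] [IsScalarTower B A M] :
    M ⊗[B] A →ₗ[B] M :=
  TensorProduct.lift (LinearMap.mk₂ B (fun m a => a • m)
    (fun m m' a => smul_add a m m')
    (fun b m a => smul_comm a b m)
    (fun m a a' => add_smul a a' m)
    (fun b m a => smul_assoc b a m))

/-- `(M, ρ)` is a comodule over the canonical coring `A ⊗_B A`. -/
def IsCanComodule (B A : Type u) [CommRing B] [CommRing A] [Algebra B A]
    (M : Type u) [AddCommGroup M] [Module B M] [Module A M] [IsScalarTower B A M]
    (ρ : M →ₗ[B] M ⊗[B] A) : Prop :=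
  (∀ (a : A) (m : M),
      ρ (a • m) = LinearMap.lTensor M (LinearMap.mulLeft B a) (ρ m)) ∧
  (∀ m : M, LinearMap.rTensor A ρ (ρ m) = LinearMap.rTensor A (unitMap B A M) (ρ m)) ∧
  (∀ m : M, actionMap B A M (ρ m) = m)

/-- The coinvariants `M^co = {m : ρ m = m ⊗ 1}` as a `B`-submodule. -/
noncomputable def coinv (B A : Type u) [CommRing B] [CommRing A] [Algebra B A]
    (M : Type u) [AddCommGroup M] [Module B M] [Module A M] [IsScalarTower B A M]
    (ρ : M →ₗ[B] M ⊗[B] A) : Submodule B M where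
  carrier := {m | ρ m = m ⊗ₜ[B] 1}
  add_mem' := by
    intro x y hx hy
    simp only [Set.mem_setOf_eq] at *
    rw [map_add, hx, hy, add_tmul]
  zero_mem' := by simp
  smul_mem' := by
    intro b m hm
    simp only [Set.mem_setOf_eq] at *
    rw [map_smul, hm, smul_tmul']

/-- The counit map `ζ_M : M^co ⊗_B A → M`, `m ⊗ a ↦ m · a`. -/
noncomputable def counitMap (B A : Type u) [CommRing B] [CommRing A] [Algebra B A]
    (M : Type u) [AddCommGroup M] [Module B M] [Module A M] [IsScalarTower B A M]
    (ρ : M →ₗ[B] M ⊗[B] A) : (coinv B A M ρ) ⊗[B] A →ₗ[B] M :=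
  actionMap B A M ∘ₗ LinearMap.rTensor A (coinv B A M ρ).subtype

/-!
Faithful flatness makes every `η_N` injective. Injectivity at the cokernel `Q` of `η_N` already
gives exactness at `N ⊗ A`: `η_Q` sends the class of `q` to the class of `q ⊗ 1` in
`Q ⊗ A = (N ⊗ A ⊗ A) / (N ⊗ 1 ⊗ A)`, which vanishes when `q` is coinvariant. Conversely, if `η_N`
is injective then `N ⊗ A = 0` forces `N = 0`.
-/

section UnitMap

variable {B A : Type u} [CommRing B] [CommRing A] [Algebra B A]
variable {N N' : Type u} [AddCommGroup N] [Module B N] [AddCommGroup N'] [Module B N']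

lemma rTensor_unitMap_apply (g : N →ₗ[B] N') (n : N) :
    LinearMap.rTensor A g (unitMap B A N n) = unitMap B A N' (g n) :=
  LinearMap.rTensor_tmul A g 1 n

lemma range_unitMap_eq_equalizer_of_cokernel_injective
    (hη : Function.Injective (unitMap B A (N ⊗[B] A ⧸ LinearMap.range (unitMap B A N)))) :
    Set.range (unitMap B A N) =
      {q : N ⊗[B] A | LinearMap.rTensor A (unitMap B A N) q = unitMap B A (N ⊗[B] A) q} := by
  refine Set.Subset.antisymm
    (Set.range_subset_iff.mpr fun n ↦ rTensor_unitMap_apply (unitMap B A N) n) fun q hq ↦ ?_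
  let π := (LinearMap.range (unitMap B A N)).mkQ
  have unitMap_class_eq_zero : unitMap B A _ (π q) = 0 :=
    calc
      unitMap B A _ (π q) = LinearMap.rTensor A π (unitMap B A (N ⊗[B] A) q) :=
        (rTensor_unitMap_apply π q).symm
      _ = LinearMap.rTensor A π (LinearMap.rTensor A (unitMap B A N) q) :=
        congrArg _ hq.symm
      _ = 0 := by
        rw [← LinearMap.rTensor_comp_apply, LinearMap.range_mkQ_comp, LinearMap.rTensor_zero,
          LinearMap.zero_apply]
  have class_eq_zero : π q = 0 := (map_eq_zero_iff _ hη).mp unitMap_class_eq_zero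
  exact (Submodule.Quotient.mk_eq_zero _).mp class_eq_zero

lemma unitMap_injective [Module.FaithfullyFlat B A] : Function.Injective (unitMap B A N) :=
  (TensorProduct.comm B A N).injective.comp
    (Module.FaithfullyFlat.tensorProduct_mk_injective (A := B) (B := A) N)

lemma faithfullyFlat_iff_forall_unitMap_injective [Module.Flat B A] :
    Module.FaithfullyFlat B A ↔
      ∀ (N : Type u) [AddCommGroup N] [Module B N], Function.Injective (unitMap B A N) := by
  refine ⟨fun _ N _ _ ↦ unitMap_injective, fun hη ↦ ?_⟩
  rw [Module.FaithfullyFlat.iff_flat_and_rTensor_reflects_triviality]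
  exact ⟨inferInstance, fun N _ _ _ ↦ (hη N).subsingleton⟩

end UnitMap

/-- If `A` is flat as a `B`-module, then `A` is faithfully flat as a `B`-module if and
only if for every `B`-module `N` the unit map `η_N : N → (N ⊗_B A)^co`, `n ↦ n ⊗ 1`,
is bijective. -/
theorem faithfullyFlat_iff_unit_bijective
    (B A : Type u) [CommRing B] [CommRing A] [Algebra B A] [Module.Flat B A] :
    Module.FaithfullyFlat B A ↔
    (∀ (N : Type u) [AddCommGroup N] [Module B N],
        Function.Injective (unitMap B A N) ∧
        Set.range (unitMap B A N) =
          {q : N ⊗[B] A |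
            LinearMap.rTensor A (unitMap B A N) q = unitMap B A (N ⊗[B] A) q}) := by
  rw [faithfullyFlat_iff_forall_unitMap_injective]
  exact ⟨fun hη N _ _ ↦ ⟨hη N, range_unitMap_eq_equalizer_of_cokernel_injective (hη _)⟩,
    fun hη N _ _ ↦ (hη N).1⟩
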